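/- arXiv:1501.03420 — 2 statements merged into one kernel-verified Lean document; each statement's English description precedes it below -/
import Mathlib

section
/- Let C be a Jacobi matrix with weights {a_n} and diagonal {b_n}. Suppose there is a positive sequence {α_n} such that: (a) a_n → ∞; (b) ∑_{n≥1} [ (a_{n+1}/a_n)(α_{n+1}/α_n) − (a_n/a_{n−1})(α_{n−1}/α_n) ]⁻ < ∞; (c) ∑_{n≥1} (1/a_{n−1}) | a_{n−1}/a_n − α_{n−1}/α_n | < ∞; (d) ∑_{n≥1} | b_{n+1}/a_n − (b_n/a_{n−1})(α_{n−1}/α_n) | < ∞; (e) ∑_{n≥0} 1/(a_n α_n) = ∞; (f) (α_{n−1}/α_n)(a_n/a_{n−1}) → 1; (g) limsup_{n→∞} |b_n|/a_n < 2. Then C is self-adjoint, C has no eigenvalues (σ_p(C) = ∅), and σ(C) = ℝ. -/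
open Filter Topology

noncomputable section

/-- Membership in the weighted ℓ² space with weight `w`. -/
def MemL2w (w : ℕ → ℝ) (f : ℕ → ℂ) : Prop :=
  Summable fun n => w n * ‖f n‖ ^ 2

/-- The weighted ℓ² inner product. -/
def innerW (w : ℕ → ℝ) (f g : ℕ → ℂ) : ℂ :=
  ∑' n, (w n : ℂ) * star (f n) * g n

/-- The formal tridiagonal action of the Jacobi matrix with off-diagonal entries `a`
and diagonal entries `b`:  `(Cx)₀ = b₀x₀ + a₀x₁`,
`(Cx)ₙ = aₙ₋₁xₙ₋₁ + bₙxₙ + aₙxₙ₊₁` for `n ≥ 1`. -/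
def jacobiAct (a b : ℕ → ℝ) (x : ℕ → ℂ) : ℕ → ℂ
  | 0 => (b 0 : ℂ) * x 0 + (a 0 : ℂ) * x 1
  | n + 1 => (a n : ℂ) * x n + (b (n + 1) : ℂ) * x (n + 1) + (a (n + 1) : ℂ) * x (n + 2)

/-- The maximal domain of the formal operator `T` inside the weighted ℓ² space. -/
def DomW (w : ℕ → ℝ) (T : (ℕ → ℂ) → ℕ → ℂ) : Set (ℕ → ℂ) :=
  {x | MemL2w w x ∧ MemL2w w (T x)}

/-- `T`, on its maximal domain in weighted ℓ², is self-adjoint: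
the graph of the adjoint operator coincides with the graph of `T`. -/
def IsSelfAdjointW (w : ℕ → ℝ) (T : (ℕ → ℂ) → ℕ → ℂ) : Prop :=
  ∀ y z : ℕ → ℂ, MemL2w w y → MemL2w w z →
    ((∀ x ∈ DomW w T, innerW w (T x) y = innerW w x z) ↔ (y ∈ DomW w T ∧ T y = z))

/-- The point spectrum (set of eigenvalues) of `T` on its maximal domain. -/
def eigenW (w : ℕ → ℝ) (T : (ℕ → ℂ) → ℕ → ℂ) : Set ℂ :=
  {l | ∃ x ∈ DomW w T, x ≠ 0 ∧ T x = fun n => l * x n}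

/-- The spectrum of `T`: those `l` for which `T - l` is not a bijection from the maximal
domain onto the weighted ℓ² space (for a closed operator this is the usual spectrum). -/
def spectrumW (w : ℕ → ℝ) (T : (ℕ → ℂ) → ℕ → ℂ) : Set ℂ :=
  {l | ¬ ((∀ x ∈ DomW w T, T x = (fun n => l * x n) → x = 0) ∧
          ∀ y : ℕ → ℂ, MemL2w w y → ∃ x ∈ DomW w T, (fun n => T x n - l * x n) = y)}

/-- The essential spectrum: the set of accumulation points of the spectrum. -/
def essSpectrumW (w : ℕ → ℝ) (T : (ℕ → ℂ) → ℕ → ℂ) : Set ℂ :=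
  {z | AccPt z (𝓟 (spectrumW w T))}

/-- `u` is a generalized eigenvector of the Jacobi matrix `(a, b)` associated with `lam`:
`(u 0, u 1) ≠ (0, 0)` and `aₙ uₙ₊₁ = (lam − bₙ) uₙ − aₙ₋₁ uₙ₋₁` for all `n ≥ 1`. -/
def IsGenEig (a b : ℕ → ℝ) (lam : ℝ) (u : ℕ → ℝ) : Prop :=
  ¬(u 0 = 0 ∧ u 1 = 0) ∧
  ∀ n : ℕ, a (n + 1) * u (n + 2) = (lam - b (n + 1)) * u (n + 1) - a n * u n

/-!
Along a generalized eigenvector `u` with real parameter, a Turán-type quadratic form in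
`(u n, u (n + 1))` decreases by at most a summable relative amount per step, and it is comparable
to `a n * α n * u n ^ 2 + a (n + 1) * α (n + 1) * u (n + 1) ^ 2` because `limsup |b n| / a n < 2`.
A discrete Gronwall argument bounds it away from zero, so the divergence of `∑ 1 / (a n * α n)`
prevents `u` from being square summable.

Hence the Jacobi matrix is in the limit point case: if the boundary form of two elements of the
maximal domain had a nonzero limit, then by Cramer's rule and Gronwall every solution of the
recurrence would be square summable. So the boundary form vanishes at infinity, which is
self-adjointness. The spectrum is then real, and an eigenvector for a real `r`, or a solution `x`
of `(C - r) x = e₀`, would be a square-summable generalized eigenvector; so there are no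
eigenvalues, and every real number lies in the spectrum.
-/

section DiscreteGronwall

variable {X S ε : ℕ → ℝ}

lemma exists_eventually_le_of_succ_le_one_add_mul (hX : ∀ᶠ n in atTop, 0 ≤ X n)
    (hε : ∀ n, 0 ≤ ε n) (hε_sum : Summable ε)
    (hstep : ∀ᶠ n in atTop, X (n + 1) ≤ (1 + ε n) * X n) :
    ∃ M, ∀ᶠ n in atTop, X n ≤ M := by
  obtain ⟨N, hN⟩ := eventually_atTop.1 (hX.and hstep)
  have hXN := (hN N le_rfl).1
  refine ⟨X N * Real.exp (∑' k, ε k), eventually_atTop.2 ⟨N, fun n hn => ?_⟩⟩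
  calc X n ≤ X N * Real.exp (∑ k ∈ Finset.Ico N n, ε k) := by
        simpa using discrete_gronwall (b := 0) hXN (by simpa using fun n hn => (hN n hn).2)
          (fun n _ => hε n) (by simp) hn
    _ ≤ X N * Real.exp (∑' k, ε k) := by
        gcongr
        exact hε_sum.sum_le_tsum _ fun k _ => hε k

lemma exists_pos_eventually_le_of_le_one_add_mul_succ (hS : ∀ᶠ n in atTop, 0 < S n)
    (hε : ∀ n, 0 ≤ ε n) (hε_sum : Summable ε)
    (hstep : ∀ᶠ n in atTop, S n ≤ (1 + ε n) * S (n + 1)) :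
    ∃ c > 0, ∀ᶠ n in atTop, c ≤ S n := by
  have hinv : ∀ᶠ n in atTop, (S (n + 1))⁻¹ ≤ (1 + ε n) * (S n)⁻¹ := by
    filter_upwards [hS, (tendsto_add_atTop_nat 1).eventually hS, hstep] with n h h' hn
    rwa [← div_eq_mul_inv, le_div_iff₀ h, inv_mul_le_iff₀ h', mul_comm]
  obtain ⟨M, hM⟩ := exists_eventually_le_of_succ_le_one_add_mul
    (hS.mono fun n h => (inv_pos.2 h).le) hε hε_sum hinv
  obtain ⟨n, hn, hMn⟩ := (hS.and hM).exists
  have hM_pos : 0 < M := (inv_pos.2 hn).trans_le hMn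
  refine ⟨M⁻¹, inv_pos.2 hM_pos, ?_⟩
  filter_upwards [hS, hM] with n h hMn using inv_le_of_inv_le₀ h hMn

end DiscreteGronwall

section SquareSummable

variable {E : Type*} [NormedAddCommGroup E]

lemma memlp_two_iff {ι : Type*} {x : ι → E} : Memℓp x 2 ↔ Summable fun n => ‖x n‖ ^ 2 := by
  simp [memℓp_gen_iff (p := 2) (by norm_num)]

lemma memlp_two_of_eventually_norm_le {u : ℕ → E} {v : ℕ → ℝ} (hv : Memℓp v 2)
    (h : ∀ᶠ n in atTop, ‖u n‖ ≤ v n) : Memℓp u 2 := by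
  rw [memlp_two_iff] at hv ⊢
  refine hv.of_norm_bounded_eventually_nat (h.mono fun n hn => ?_)
  rw [Real.norm_of_nonneg (by positivity)]
  exact pow_le_pow_left₀ (norm_nonneg _) (hn.trans (Real.le_norm_self _)) 2

lemma memlp_two_of_eventually_eq_zero {u : ℕ → E} (h : ∀ᶠ n in atTop, u n = 0) : Memℓp u 2 :=
  memlp_two_of_eventually_norm_le zero_memℓp (h.mono fun n hn => by simp [hn])

lemma summable_norm_mul_norm {ι F : Type*} [NormedAddCommGroup F] {f : ι → E} {g : ι → F}
    (hf : Memℓp f 2) (hg : Memℓp g 2) : Summable fun n => ‖f n‖ * ‖g n‖ := by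
  simpa using lp.summable_mul (by rw [Real.holderConjugate_iff]; norm_num)
    (⟨_, hf.norm⟩ : lp (fun _ : ι => ℝ) 2) ⟨_, hg.norm⟩

lemma summable_mul_of_memlp_two {ι : Type*} {f g : ι → ℂ} (hf : Memℓp f 2)
    (hg : Memℓp g 2) : Summable fun i => f i * g i :=
  .of_norm (by simpa using summable_norm_mul_norm hf hg)

lemma memL2w_one {x : ℕ → ℂ} : MemL2w (fun _ => 1) x ↔ Memℓp x 2 := by
  simp [MemL2w, memlp_two_iff]

lemma mem_DomW_one {T : (ℕ → ℂ) → ℕ → ℂ} {x : ℕ → ℂ} :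
    x ∈ DomW (fun _ => 1) T ↔ Memℓp x 2 ∧ Memℓp (T x) 2 := by
  simp [DomW, memL2w_one]

lemma innerW_one (f g : ℕ → ℂ) : innerW (fun _ => 1) f g = ∑' n, star f n * g n := by
  simp [innerW]

end SquareSummable

section Recurrence

variable {a b : ℕ → ℝ}

/-- `x` satisfies the eigenvalue equation `C x = l x` in every row but the zeroth one. -/
def SolvesRecurrence (a b : ℕ → ℝ) (l : ℂ) (x : ℕ → ℂ) : Prop :=
  ∀ n, jacobiAct a b x (n + 1) = l * x (n + 1)

/-- No generalized eigenvector associated with a real parameter is square summable. -/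
def NoL2GenEig (a b : ℕ → ℝ) : Prop :=
  ∀ (lam : ℝ) (u : ℕ → ℝ), IsGenEig a b lam u → ¬ Memℓp u 2

/-- Weyl's limit point case at infinity: for some parameter, the recurrence has a solution that is
not square summable. -/
def IsLimitPoint (a b : ℕ → ℝ) : Prop :=
  ∃ l x, SolvesRecurrence a b l x ∧ ¬ Memℓp x 2

/-- The orthonormal polynomials of the Jacobi matrix, evaluated at `lam`. -/
def orthonormalPoly (a b : ℕ → ℝ) (lam : ℝ) : ℕ → ℝ
  | 0 => 1
  | 1 => (lam - b 0) / a 0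
  | n + 2 => ((lam - b (n + 1)) * orthonormalPoly a b lam (n + 1)
      - a n * orthonormalPoly a b lam n) / a (n + 1)

lemma isGenEig_orthonormalPoly (ha : ∀ n, a n ≠ 0) (b : ℕ → ℝ) (lam : ℝ) :
    IsGenEig a b lam (orthonormalPoly a b lam) :=
  ⟨fun h => one_ne_zero h.1, fun n => by
    rw [orthonormalPoly, mul_div_cancel₀ _ (ha (n + 1))]⟩

lemma IsGenEig.ne_zero_or_succ_ne_zero {lam : ℝ} {u : ℕ → ℝ} (hu : IsGenEig a b lam u)
    (ha : ∀ n, a n ≠ 0) (n : ℕ) : u n ≠ 0 ∨ u (n + 1) ≠ 0 := by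
  induction n with
  | zero => exact not_and_or.1 hu.1
  | succ n ih =>
    by_contra! h
    have hn : u n = 0 := by simpa [h.1, h.2, ha n] using hu.2 n
    exact ih.elim (· hn) (· h.1)

lemma IsGenEig.solvesRecurrence {lam : ℝ} {u : ℕ → ℝ} (hu : IsGenEig a b lam u) :
    SolvesRecurrence a b lam fun n => (u n : ℂ) := fun n => by
  have h : a n * u n + b (n + 1) * u (n + 1) + a (n + 1) * u (n + 2) = lam * u (n + 1) := by
    linarith [hu.2 n]
  simp only [jacobiAct]
  exact_mod_cast h

lemma NoL2GenEig.isLimitPoint (H : NoL2GenEig a b) (ha : ∀ n, a n ≠ 0) : IsLimitPoint a b := by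
  have hu := isGenEig_orthonormalPoly ha b 0
  refine ⟨_, _, hu.solvesRecurrence, fun h => H 0 _ hu ?_⟩
  exact h.norm.mono fun n => by simp

lemma SolvesRecurrence.eq_zero {l : ℂ} {x : ℕ → ℂ} (hx : SolvesRecurrence a b l x)
    (ha : ∀ n, a n ≠ 0) (h0 : x 0 = 0) (h1 : x 1 = 0) : x = 0 := by
  have hzero : ∀ n, x n = 0 ∧ x (n + 1) = 0 := by
    intro n
    induction n with
    | zero => exact ⟨h0, h1⟩
    | succ n ih =>
      have h := hx n
      simp only [jacobiAct, ih.1, ih.2, mul_zero, zero_add] at h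
      exact ⟨ih.2, by simpa [ha (n + 1)] using h⟩
  exact funext fun n => (hzero n).1

lemma NoL2GenEig.eq_zero_of_memlp (H : NoL2GenEig a b) (ha : ∀ n, a n ≠ 0) {lam : ℝ} {x : ℕ → ℂ}
    (hx : SolvesRecurrence a b lam x) (hx2 : Memℓp x 2) : x = 0 := by
  have hzero : ∀ u : ℕ → ℝ, Memℓp u 2 →
      (∀ n, a (n + 1) * u (n + 2) = (lam - b (n + 1)) * u (n + 1) - a n * u n) →
      u 0 = 0 ∧ u 1 = 0 :=
    fun u hu2 hu => by_contra fun h => H lam u ⟨h, hu⟩ hu2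
  have hre := hzero (fun n => (x n).re) (hx2.norm.mono fun n => Complex.abs_re_le_norm _)
    fun n => by
      have := congrArg Complex.re (hx n)
      simp only [jacobiAct, Complex.add_re, Complex.re_ofReal_mul] at this
      linarith
  have him := hzero (fun n => (x n).im) (hx2.norm.mono fun n => Complex.abs_im_le_norm _)
    fun n => by
      have := congrArg Complex.im (hx n)
      simp only [jacobiAct, Complex.add_im, Complex.im_ofReal_mul] at this
      linarith
  exact hx.eq_zero ha (Complex.ext hre.1 him.1) (Complex.ext hre.2 him.2)

end Recurrence

section TuranForm

variable {a b α u : ℕ → ℝ} {lam : ℝ}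

/-- The coefficient of `u (n + 2) ^ 2` in the increment of `turanForm`, divided by
`a (n + 1) * α (n + 1)`. -/
def turanSqCoeff (a α : ℕ → ℝ) (n : ℕ) : ℝ :=
  a (n + 2) / a (n + 1) * (α (n + 2) / α (n + 1)) - a (n + 1) / a n * (α n / α (n + 1))

/-- The part of the coefficient of `u (n + 1) * u (n + 2)` in the increment of `turanForm` that
does not involve the spectral parameter, divided by `a (n + 1) * α (n + 1)`. -/
def turanCrossCoeff (a b α : ℕ → ℝ) (n : ℕ) : ℝ :=
  b (n + 2) / a (n + 1) - b (n + 1) / a n * (α n / α (n + 1))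

/-- The factor multiplying `-lam` in the coefficient of `u (n + 1) * u (n + 2)` in the increment
of `turanForm`, divided by `a (n + 1) * α (n + 1)`. -/
def turanLamCoeff (a α : ℕ → ℝ) (n : ℕ) : ℝ :=
  1 / a n * (a n / a (n + 1) - α n / α (n + 1))

/-- The diagonal part of the Turán form. -/
def turanDiag (a α u : ℕ → ℝ) (n : ℕ) : ℝ :=
  a n * α n * u n ^ 2 + a (n + 1) * α (n + 1) * u (n + 1) ^ 2

/-- The Turán form, which is almost nondecreasing along generalized eigenvectors. By the recurrence
it then equals the weighted Turán determinant
`a (n + 1) * (α (n + 1) * u (n + 1) ^ 2 - α n * u n * u (n + 2))`. -/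
def turanForm (a b α : ℕ → ℝ) (lam : ℝ) (u : ℕ → ℝ) (n : ℕ) : ℝ :=
  turanDiag a α u n - (lam - b (n + 1)) * α n * u n * u (n + 1)

/-- The relative rate at which the Turán form of a generalized eigenvector can decrease. -/
def turanDefect (a b α : ℕ → ℝ) (lam : ℝ) (n : ℕ) : ℝ :=
  (turanSqCoeff a α n)⁻ + |lam| * |turanLamCoeff a α n| + |turanCrossCoeff a b α n|

lemma turanDefect_nonneg (a b α : ℕ → ℝ) (lam : ℝ) (n : ℕ) : 0 ≤ turanDefect a b α lam n := by
  unfold turanDefect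
  positivity

lemma IsGenEig.turanForm_succ_sub (hu : IsGenEig a b lam u) (ha : ∀ n, a n ≠ 0)
    (hα : ∀ n, α n ≠ 0) (n : ℕ) :
    turanForm a b α lam u (n + 1) - turanForm a b α lam u n = a (n + 1) * α (n + 1) *
      (turanSqCoeff a α n * u (n + 2) ^ 2
        + (turanCrossCoeff a b α n - lam * turanLamCoeff a α n) * (u (n + 1) * u (n + 2))) := by
  have hun : u n = ((lam - b (n + 1)) * u (n + 1) - a (n + 1) * u (n + 2)) / a n := by
    rw [eq_div_iff (ha n)]
    linarith [hu.2 n]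
  have := ha n
  have := ha (n + 1)
  have := hα (n + 1)
  simp only [turanForm, turanDiag, turanSqCoeff, turanCrossCoeff, turanLamCoeff, hun, add_assoc,
    Nat.reduceAdd]
  field_simp
  ring

lemma neg_turanDefect_mul_le (a b α : ℕ → ℝ) (lam : ℝ) (n : ℕ) (x y : ℝ) :
    -(turanDefect a b α lam n * (x ^ 2 + y ^ 2)) ≤ turanSqCoeff a α n * y ^ 2
      + (turanCrossCoeff a b α n - lam * turanLamCoeff a α n) * (x * y) := by
  set s := turanSqCoeff a α n
  set c := turanCrossCoeff a b α n
  set d := turanLamCoeff a α n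
  have hsq : -(s⁻ * (x ^ 2 + y ^ 2)) ≤ s * y ^ 2 := by
    nlinarith [neg_le_negPart s, negPart_nonneg s, sq_nonneg x, sq_nonneg y]
  have hxy : |x * y| ≤ x ^ 2 + y ^ 2 := by
    rw [abs_le]
    constructor <;> nlinarith [sq_nonneg (x + y), sq_nonneg (x - y)]
  have hcross : |(c - lam * d) * (x * y)| ≤ (|lam| * |d| + |c|) * (x ^ 2 + y ^ 2) := by
    rw [abs_mul]
    gcongr
    rw [← abs_mul, add_comm]
    exact abs_sub _ _
  simp only [turanDefect]
  linarith [neg_abs_le ((c - lam * d) * (x * y))]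

lemma IsGenEig.turanForm_le_succ_add (hu : IsGenEig a b lam u) (ha : ∀ n, 0 < a n)
    (hα : ∀ n, 0 < α n) (n : ℕ) :
    turanForm a b α lam u n ≤ turanForm a b α lam u (n + 1) + turanDefect a b α lam n *
      (a (n + 1) * α (n + 1) * (u (n + 1) ^ 2 + u (n + 2) ^ 2)) := by
  have hA : 0 ≤ a (n + 1) * α (n + 1) := (mul_pos (ha _) (hα _)).le
  have hincr := hu.turanForm_succ_sub (fun n => (ha n).ne') (fun n => (hα n).ne') n
  have hbound := mul_le_mul_of_nonneg_left
    (neg_turanDefect_mul_le a b α lam n (u (n + 1)) (u (n + 2))) hA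
  linarith

lemma exists_lt_eventually_abs_sub_le_mul {c : ℝ} (ha : Tendsto a atTop atTop)
    (hb : limsup (fun n => ((|b n| / a n : ℝ) : EReal)) atTop < (c : EReal)) (lam : ℝ) :
    ∃ q < c, ∀ᶠ n in atTop, |lam - b n| ≤ q * a n := by
  obtain ⟨p, hbp, hpc⟩ := EReal.lt_iff_exists_real_btwn.1 hb
  obtain ⟨q, hpq, hqc⟩ := exists_between (EReal.coe_lt_coe_iff.1 hpc)
  have hlam : ∀ᶠ n in atTop, |lam| / a n < q - p :=
    (ha.const_div_atTop |lam|).eventually_lt_const (sub_pos.2 hpq)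
  refine ⟨q, hqc, ?_⟩
  filter_upwards [ha.eventually_gt_atTop 0, eventually_lt_of_limsup_lt hbp, hlam]
    with n han hbn hlamn
  have hbn : |b n| < p * a n := (div_lt_iff₀ han).1 (EReal.coe_lt_coe_iff.1 hbn)
  rw [div_lt_iff₀ han] at hlamn
  linarith [abs_sub lam (b n)]

lemma exists_lt_two_eventually_sq_le_mul (ha : ∀ n, 0 < a n) (hα : ∀ n, 0 < α n)
    (ha_top : Tendsto a atTop atTop)
    (hratio : Tendsto (fun n => α n / α (n + 1) * (a (n + 1) / a n)) atTop (𝓝 1))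
    (hb : limsup (fun n => ((|b n| / a n : ℝ) : EReal)) atTop < ((2 : ℝ) : EReal)) (lam : ℝ) :
    ∃ κ, 0 ≤ κ ∧ κ < 2 ∧ ∀ᶠ n in atTop,
      ((lam - b (n + 1)) * α n) ^ 2 ≤ κ ^ 2 * ((a n * α n) * (a (n + 1) * α (n + 1))) := by
  obtain ⟨q, hq2, hq⟩ := exists_lt_eventually_abs_sub_le_mul ha_top hb lam
  obtain ⟨m, hm⟩ := hq.exists
  have hq0 : 0 ≤ q := nonneg_of_mul_nonneg_left ((abs_nonneg _).trans hm) (ha m)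
  obtain ⟨κ, hqκ, hκ2⟩ := exists_between hq2
  have hr : ∀ᶠ n in atTop, q ^ 2 * (α n / α (n + 1) * (a (n + 1) / a n)) < κ ^ 2 :=
    (hratio.const_mul (q ^ 2)).eventually_lt_const (by rw [mul_one]; gcongr)
  refine ⟨κ, hq0.trans hqκ.le, hκ2, ?_⟩
  filter_upwards [(tendsto_add_atTop_nat 1).eventually hq, hr] with n hqn hrn
  have := ha n
  have := ha (n + 1)
  have := hα n
  have := hα (n + 1)
  calc ((lam - b (n + 1)) * α n) ^ 2 = |lam - b (n + 1)| ^ 2 * α n ^ 2 := by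
        rw [mul_pow, sq_abs]
    _ ≤ (q * a (n + 1)) ^ 2 * α n ^ 2 := by gcongr
    _ = q ^ 2 * (α n / α (n + 1) * (a (n + 1) / a n))
          * ((a n * α n) * (a (n + 1) * α (n + 1))) := by field_simp
    _ ≤ κ ^ 2 * ((a n * α n) * (a (n + 1) * α (n + 1))) := by gcongr

lemma abs_mul_mul_le_of_sq_le {A B c κ : ℝ} (hA : 0 ≤ A) (hB : 0 ≤ B) (hκ : 0 ≤ κ)
    (h : c ^ 2 ≤ κ ^ 2 * (A * B)) (x y : ℝ) :
    |c * x * y| ≤ κ / 2 * (A * x ^ 2 + B * y ^ 2) := by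
  refine abs_le_of_sq_le_sq ?_ (by positivity)
  calc (c * x * y) ^ 2 = c ^ 2 * (x * y) ^ 2 := by ring
    _ ≤ κ ^ 2 * (A * B) * (x * y) ^ 2 := by gcongr
    _ ≤ (κ / 2 * (A * x ^ 2 + B * y ^ 2)) ^ 2 := by
        nlinarith [mul_nonneg (sq_nonneg κ) (sq_nonneg (A * x ^ 2 - B * y ^ 2))]

lemma exists_lt_one_eventually_abs_turanForm_sub_turanDiag_le (ha : ∀ n, 0 < a n)
    (hα : ∀ n, 0 < α n) (ha_top : Tendsto a atTop atTop)
    (hratio : Tendsto (fun n => α n / α (n + 1) * (a (n + 1) / a n)) atTop (𝓝 1))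
    (hb : limsup (fun n => ((|b n| / a n : ℝ) : EReal)) atTop < ((2 : ℝ) : EReal))
    (lam : ℝ) (u : ℕ → ℝ) :
    ∃ q < 1, ∀ᶠ n in atTop,
      |turanForm a b α lam u n - turanDiag a α u n| ≤ q * turanDiag a α u n := by
  obtain ⟨κ, hκ0, hκ2, hκ⟩ := exists_lt_two_eventually_sq_le_mul ha hα ha_top hratio hb lam
  refine ⟨κ / 2, by linarith, hκ.mono fun n hn => ?_⟩
  have hA : ∀ n, 0 ≤ a n * α n := fun n => (mul_pos (ha n) (hα n)).le
  simpa [turanForm, turanDiag] using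
    abs_mul_mul_le_of_sq_le (hA n) (hA (n + 1)) hκ0 hn (u n) (u (n + 1))

lemma eventually_mul_le_two_mul_succ (ha : ∀ n, 0 < a n) (hα : ∀ n, 0 < α n)
    (hsq : Summable fun n => (turanSqCoeff a α n)⁻)
    (hratio : Tendsto (fun n => α n / α (n + 1) * (a (n + 1) / a n)) atTop (𝓝 1)) :
    ∀ᶠ n in atTop, a n * α n ≤ 2 * (a (n + 1) * α (n + 1)) := by
  rw [← map_add_atTop_eq_nat 1, eventually_map]
  filter_upwards [hratio.eventually_const_lt (show (3 / 4 : ℝ) < 1 by norm_num),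
    hsq.tendsto_atTop_zero.eventually_lt_const (show (0 : ℝ) < 1 / 4 by norm_num)] with n hr hsn
  have hratio_succ : 1 / 2 < a (n + 2) / a (n + 1) * (α (n + 2) / α (n + 1)) := by
    have := (neg_le_negPart (turanSqCoeff a α n)).trans_lt hsn
    rw [turanSqCoeff, mul_comm (a (n + 1) / a n)] at this
    linarith
  rw [div_mul_div_comm, lt_div_iff₀ (mul_pos (ha _) (hα _))] at hratio_succ
  linarith

lemma IsGenEig.turanDiag_pos (hu : IsGenEig a b lam u) (ha : ∀ n, 0 < a n) (hα : ∀ n, 0 < α n)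
    (n : ℕ) : 0 < turanDiag a α u n := by
  have := mul_pos (ha n) (hα n)
  have := mul_pos (ha (n + 1)) (hα (n + 1))
  rcases hu.ne_zero_or_succ_ne_zero (fun n => (ha n).ne') n with h | h <;>
    simp only [turanDiag] <;> positivity

lemma IsGenEig.turanForm_le_mul_succ (hu : IsGenEig a b lam u) (ha : ∀ n, 0 < a n)
    (hα : ∀ n, 0 < α n) {δ : ℝ} (hδ : 0 < δ) {n : ℕ}
    (hmono : a (n + 1) * α (n + 1) ≤ 2 * (a (n + 2) * α (n + 2)))
    (hlower : δ * turanDiag a α u (n + 1) ≤ turanForm a b α lam u (n + 1)) :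
    turanForm a b α lam u n
      ≤ (1 + 2 / δ * turanDefect a b α lam n) * turanForm a b α lam u (n + 1) := by
  set S := turanForm a b α lam u
  set ε := turanDefect a b α lam
  have hquad : a (n + 1) * α (n + 1) * (u (n + 1) ^ 2 + u (n + 2) ^ 2)
      ≤ 2 * turanDiag a α u (n + 1) := by
    have := mul_le_mul_of_nonneg_right hmono (sq_nonneg (u (n + 2)))
    have := mul_nonneg (mul_pos (ha (n + 1)) (hα (n + 1))).le (sq_nonneg (u (n + 1)))
    simp only [turanDiag, add_assoc, Nat.reduceAdd]
    linarith
  have hdiag : turanDiag a α u (n + 1) ≤ S (n + 1) / δ := (le_div_iff₀' hδ).2 hlower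
  calc S n ≤ S (n + 1) + ε n * (a (n + 1) * α (n + 1) * (u (n + 1) ^ 2 + u (n + 2) ^ 2)) :=
        hu.turanForm_le_succ_add ha hα n
    _ ≤ S (n + 1) + ε n * (2 * (S (n + 1) / δ)) :=
        add_le_add_right (mul_le_mul_of_nonneg_left (by linarith)
          (turanDefect_nonneg a b α lam n)) _
    _ = (1 + 2 / δ * ε n) * S (n + 1) := by ring

lemma IsGenEig.exists_pos_eventually_le_turanDiag (hu : IsGenEig a b lam u) (ha : ∀ n, 0 < a n)
    (hα : ∀ n, 0 < α n) (hdefect : Summable (turanDefect a b α lam))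
    (hmono : ∀ᶠ n in atTop, a n * α n ≤ 2 * (a (n + 1) * α (n + 1))) {q : ℝ} (hq : q < 1)
    (hcomp : ∀ᶠ n in atTop,
      |turanForm a b α lam u n - turanDiag a α u n| ≤ q * turanDiag a α u n) :
    ∃ c > 0, ∀ᶠ n in atTop, c ≤ turanDiag a α u n := by
  have hδ : 0 < 1 - q := sub_pos.2 hq
  have hpos : ∀ n, 0 < turanDiag a α u n := hu.turanDiag_pos ha hα
  have hlower : ∀ᶠ n in atTop, (1 - q) * turanDiag a α u n ≤ turanForm a b α lam u n :=
    hcomp.mono fun n hn => by linarith [(abs_le.1 hn).1]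
  have hupper : ∀ᶠ n in atTop, turanForm a b α lam u n ≤ 2 * turanDiag a α u n :=
    hcomp.mono fun n hn => by nlinarith [(abs_le.1 hn).2, hpos n]
  have hstep : ∀ᶠ n in atTop, turanForm a b α lam u n
      ≤ (1 + 2 / (1 - q) * turanDefect a b α lam n) * turanForm a b α lam u (n + 1) := by
    have hshift := tendsto_add_atTop_nat 1
    filter_upwards [hshift.eventually hlower, hshift.eventually hmono] with n hln hmn
    exact hu.turanForm_le_mul_succ ha hα hδ hmn hln
  obtain ⟨c, hc, hcS⟩ := exists_pos_eventually_le_of_le_one_add_mul_succ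
    (hlower.mono fun n hn => (mul_pos hδ (hpos n)).trans_le hn)
    (fun n => mul_nonneg (by positivity) (turanDefect_nonneg a b α lam n))
    (hdefect.mul_left (2 / (1 - q))) hstep
  refine ⟨c / 2, half_pos hc, ?_⟩
  filter_upwards [hcS, hupper] with n hcn hn
  linarith

lemma not_memlp_two_of_le_turanDiag (hA : ∀ n, 0 < a n * α n)
    (hmono : ∀ᶠ n in atTop, a n * α n ≤ 2 * (a (n + 1) * α (n + 1)))
    (hdiv : ¬ Summable fun n => 1 / (a n * α n)) {c : ℝ} (hc : 0 < c)
    (hV : ∀ᶠ n in atTop, c ≤ turanDiag a α u n) : ¬ Memℓp u 2 := by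
  intro hu2
  have hu_sq : Summable fun n => u n ^ 2 := by simpa [memlp_two_iff] using hu2
  have hsum : Summable fun n => c⁻¹ * (2 * u n ^ 2 + u (n + 1) ^ 2) :=
    ((hu_sq.mul_left 2).add ((summable_nat_add_iff 1).2 hu_sq)).mul_left c⁻¹
  refine hdiv ((summable_nat_add_iff 1).1 (hsum.of_norm_bounded_eventually_nat ?_))
  filter_upwards [hmono, hV] with n hmn hVn
  rw [Real.norm_of_nonneg (one_div_pos.2 (hA _)).le, div_le_iff₀ (hA _), mul_assoc,
    le_inv_mul_iff₀ hc, mul_one]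
  calc c ≤ turanDiag a α u n := hVn
    _ ≤ 2 * (a (n + 1) * α (n + 1)) * u n ^ 2 + a (n + 1) * α (n + 1) * u (n + 1) ^ 2 := by
        unfold turanDiag
        gcongr
    _ = (2 * u n ^ 2 + u (n + 1) ^ 2) * (a (n + 1) * α (n + 1)) := by ring

lemma summable_turanDefect (ha : ∀ n, 0 < a n)
    (hsq : Summable fun n => (turanSqCoeff a α n)⁻)
    (hlam : Summable fun n => 1 / a n * |a n / a (n + 1) - α n / α (n + 1)|)
    (hcross : Summable fun n => |turanCrossCoeff a b α n|) (lam : ℝ) :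
    Summable (turanDefect a b α lam) := by
  refine (hsq.add (Summable.mul_left |lam| (hlam.congr fun n => ?_))).add hcross
  rw [turanLamCoeff, abs_mul, abs_of_pos (one_div_pos.2 (ha n))]

end TuranForm

section Wronskian

variable {a b : ℕ → ℝ} {f g u : ℕ → ℂ} {l : ℂ}

/-- The discrete Wronskian of `f` and `g`: the boundary term at `n` in Green's formula for the
Jacobi matrix. -/
def wronsk (a : ℕ → ℝ) (f g : ℕ → ℂ) (n : ℕ) : ℂ :=
  a n * (f (n + 1) * g n - f n * g (n + 1))

lemma wronsk_succ (a b : ℕ → ℝ) (f g : ℕ → ℂ) (n : ℕ) :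
    wronsk a f g (n + 1) = wronsk a f g n
      + (jacobiAct a b f (n + 1) * g (n + 1) - f (n + 1) * jacobiAct a b g (n + 1)) := by
  simp only [wronsk, jacobiAct]
  ring

lemma sum_range_jacobiAct_mul_sub (a b : ℕ → ℝ) (f g : ℕ → ℂ) (n : ℕ) :
    ∑ k ∈ Finset.range (n + 1), (jacobiAct a b f k * g k - f k * jacobiAct a b g k)
      = wronsk a f g n := by
  induction n with
  | zero => simp only [zero_add, Finset.sum_range_one, jacobiAct, wronsk]; ring
  | succ n ih => rw [Finset.sum_range_succ, ih, wronsk_succ a b]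

lemma tendsto_wronsk (hF : Summable fun n => jacobiAct a b f n * g n)
    (hG : Summable fun n => f n * jacobiAct a b g n) :
    Tendsto (wronsk a f g) atTop
      (𝓝 (∑' n, jacobiAct a b f n * g n - ∑' n, f n * jacobiAct a b g n)) :=
  ((hF.hasSum.sub hG.hasSum).tendsto_sum_nat.comp (tendsto_add_atTop_nat 1)).congr
    (sum_range_jacobiAct_mul_sub a b f g)

lemma wronsk_mul_eq (a : ℕ → ℝ) (f g u : ℕ → ℂ) (n : ℕ) :
    wronsk a f g n * u (n + 1) = wronsk a u g n * f (n + 1) - wronsk a u f n * g (n + 1) := by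
  simp only [wronsk]
  ring

lemma SolvesRecurrence.norm_wronsk_succ_le (hu : SolvesRecurrence a b l u) (h : ℕ → ℂ) (n : ℕ) :
    ‖wronsk a u h (n + 1)‖
      ≤ ‖wronsk a u h n‖ + ‖u (n + 1)‖ * ‖(jacobiAct a b h - l • h) (n + 1)‖ := by
  have hsucc : wronsk a u h (n + 1)
      = wronsk a u h n - u (n + 1) * (jacobiAct a b h - l • h) (n + 1) := by
    simp only [wronsk_succ a b, hu n, Pi.sub_apply, Pi.smul_apply, smul_eq_mul]
    ring
  rw [hsucc, ← norm_mul]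
  exact norm_sub_le _ _

lemma eventually_norm_le_of_tendsto_wronsk {w : ℂ} (hw : Tendsto (wronsk a f g) atTop (𝓝 w))
    (hw0 : w ≠ 0) (u : ℕ → ℂ) :
    ∀ᶠ n in atTop, ‖u (n + 1)‖ ≤ 2 / ‖w‖ *
      ((‖f (n + 1)‖ + ‖g (n + 1)‖) * (‖wronsk a u f n‖ + ‖wronsk a u g n‖)) := by
  have hw_pos : 0 < ‖w‖ := norm_pos_iff.2 hw0
  filter_upwards [hw.norm.eventually_const_lt (half_lt_self hw_pos)] with n hn
  rw [div_mul_eq_mul_div, le_div_iff₀ hw_pos]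
  have hcramer : ‖w‖ / 2 * ‖u (n + 1)‖
      ≤ (‖f (n + 1)‖ + ‖g (n + 1)‖) * (‖wronsk a u f n‖ + ‖wronsk a u g n‖) :=
    calc ‖w‖ / 2 * ‖u (n + 1)‖ ≤ ‖wronsk a f g n * u (n + 1)‖ := by
          rw [norm_mul]; gcongr
      _ ≤ ‖wronsk a u g n‖ * ‖f (n + 1)‖ + ‖wronsk a u f n‖ * ‖g (n + 1)‖ := by
          rw [wronsk_mul_eq, ← norm_mul, ← norm_mul]; exact norm_sub_le _ _
      _ ≤ (‖f (n + 1)‖ + ‖g (n + 1)‖) * (‖wronsk a u f n‖ + ‖wronsk a u g n‖) := by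
          have := mul_nonneg (norm_nonneg (f (n + 1))) (norm_nonneg (wronsk a u f n))
          have := mul_nonneg (norm_nonneg (g (n + 1))) (norm_nonneg (wronsk a u g n))
          linarith
  linarith

lemma SolvesRecurrence.exists_eventually_norm_wronsk_le (hu : SolvesRecurrence a b l u)
    (hf : Memℓp f 2) (hg : Memℓp g 2) (hF : Memℓp (jacobiAct a b f) 2)
    (hG : Memℓp (jacobiAct a b g) 2) {c : ℝ} (hc : 0 ≤ c)
    (hu_le : ∀ᶠ n in atTop, ‖u (n + 1)‖ ≤
      c * ((‖f (n + 1)‖ + ‖g (n + 1)‖) * (‖wronsk a u f n‖ + ‖wronsk a u g n‖))) :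
    ∃ M, ∀ᶠ n in atTop, ‖wronsk a u f n‖ + ‖wronsk a u g n‖ ≤ M := by
  set F := jacobiAct a b f - l • f
  set G := jacobiAct a b g - l • g
  have hfg : Memℓp (fun n => ‖f n‖ + ‖g n‖) 2 := hf.norm.add hg.norm
  have hFG : Memℓp (fun n => ‖F n‖ + ‖G n‖) 2 :=
    (hF.sub (hf.const_smul l)).norm.add (hG.sub (hg.const_smul l)).norm
  have hsum : Summable fun n => c * ((‖f n‖ + ‖g n‖) * (‖F n‖ + ‖G n‖)) := by
    refine ((summable_norm_mul_norm hfg hFG).congr fun n => ?_).mul_left c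
    rw [Real.norm_of_nonneg (by positivity), Real.norm_of_nonneg (by positivity)]
  refine exists_eventually_le_of_succ_le_one_add_mul
    (.of_forall fun n => by positivity) (fun n => by positivity)
    ((summable_nat_add_iff 1).2 hsum) (hu_le.mono fun n hn => ?_)
  have hFG_mul := mul_le_mul_of_nonneg_right hn (show 0 ≤ ‖F (n + 1)‖ + ‖G (n + 1)‖ by positivity)
  linarith [hu.norm_wronsk_succ_le f n, hu.norm_wronsk_succ_le g n]

lemma SolvesRecurrence.memlp_of_tendsto_wronsk (hu : SolvesRecurrence a b l u)
    (hf : Memℓp f 2) (hg : Memℓp g 2) (hF : Memℓp (jacobiAct a b f) 2)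
    (hG : Memℓp (jacobiAct a b g) 2) {w : ℂ} (hw : Tendsto (wronsk a f g) atTop (𝓝 w))
    (hw0 : w ≠ 0) : Memℓp u 2 := by
  have hu_le := eventually_norm_le_of_tendsto_wronsk hw hw0 u
  obtain ⟨M, hM⟩ := hu.exists_eventually_norm_wronsk_le hf hg hF hG (by positivity) hu_le
  have hv : Memℓp (fun n => 2 / ‖w‖ * M * (‖f n‖ + ‖g n‖)) 2 :=
    (hf.norm.add hg.norm).const_mul (2 / ‖w‖ * M)
  refine memlp_two_of_eventually_norm_le hv ?_
  rw [← map_add_atTop_eq_nat 1, eventually_map]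
  filter_upwards [hu_le, hM] with n hn hMn
  calc ‖u (n + 1)‖ ≤ 2 / ‖w‖ * ((‖f (n + 1)‖ + ‖g (n + 1)‖) * M) := hn.trans (by gcongr)
    _ = 2 / ‖w‖ * M * (‖f (n + 1)‖ + ‖g (n + 1)‖) := by ring

theorem IsLimitPoint.wronsk_limit_eq_zero (hC : IsLimitPoint a b)
    (hf : Memℓp f 2) (hg : Memℓp g 2) (hF : Memℓp (jacobiAct a b f) 2)
    (hG : Memℓp (jacobiAct a b g) 2) {w : ℂ} (hw : Tendsto (wronsk a f g) atTop (𝓝 w)) :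
    w = 0 := by
  obtain ⟨l, u, hu, hu2⟩ := hC
  by_contra hw0
  exact hu2 (hu.memlp_of_tendsto_wronsk hf hg hF hG hw hw0)

end Wronskian

section SelfAdjoint

variable {a b : ℕ → ℝ}

lemma jacobiAct_star (a b : ℕ → ℝ) (f : ℕ → ℂ) :
    jacobiAct a b (star f) = star (jacobiAct a b f) := by
  ext n
  cases n <;> simp [jacobiAct]

lemma innerW_jacobiAct_eq_of_tendsto_wronsk {x y : ℕ → ℂ}
    (hTx : Summable fun n => jacobiAct a b (star x) n * y n)
    (hTy : Summable fun n => star x n * jacobiAct a b y n)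
    (hw : Tendsto (wronsk a (star x) y) atTop (𝓝 0)) :
    innerW (fun _ => 1) (jacobiAct a b x) y = innerW (fun _ => 1) x (jacobiAct a b y) := by
  simpa [innerW_one, jacobiAct_star] using
    sub_eq_zero.1 (tendsto_nhds_unique (tendsto_wronsk hTx hTy) hw)

lemma innerW_single (k : ℕ) (z : ℕ → ℂ) : innerW (fun _ => 1) (Pi.single k 1) z = z k := by
  rw [innerW_one, tsum_eq_single k fun n hn => by simp [hn]]
  simp

lemma jacobiAct_single_eq_zero (a b : ℕ → ℝ) {k n : ℕ} (h : k + 2 ≤ n) :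
    jacobiAct a b (Pi.single k 1) n = 0 := by
  obtain ⟨n, rfl⟩ := Nat.exists_eq_add_of_le' (by omega : 1 ≤ n)
  have h₀ : n ≠ k := by omega
  have h₁ : n + 1 ≠ k := by omega
  have h₂ : n + 2 ≠ k := by omega
  simp [jacobiAct, h₀, h₁, h₂]

lemma single_mem_DomW_jacobiAct (a b : ℕ → ℝ) (k : ℕ) :
    Pi.single k 1 ∈ DomW (fun _ => 1) (jacobiAct a b) := by
  refine mem_DomW_one.2 ⟨memlp_two_of_eventually_eq_zero ?_, memlp_two_of_eventually_eq_zero ?_⟩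
  · exact (eventually_gt_atTop k).mono fun n hn => Pi.single_eq_of_ne hn.ne' _
  · exact (eventually_ge_atTop (k + 2)).mono fun n hn => jacobiAct_single_eq_zero a b hn

lemma innerW_jacobiAct_single (a b : ℕ → ℝ) (k : ℕ) (y : ℕ → ℂ) :
    innerW (fun _ => 1) (jacobiAct a b (Pi.single k 1)) y = jacobiAct a b y k := by
  have hstar : star (Pi.single k 1 : ℕ → ℂ) = Pi.single k 1 := by simp
  rw [← innerW_single k (jacobiAct a b y)]
  refine innerW_jacobiAct_eq_of_tendsto_wronsk ?_ ?_ ?_ <;> rw [hstar]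
  · refine summable_of_ne_finset_zero (s := Finset.range (k + 2)) fun n hn => ?_
    rw [jacobiAct_single_eq_zero a b (by simpa using hn), zero_mul]
  · refine summable_of_ne_finset_zero (s := {k}) fun n hn => ?_
    rw [Pi.single_eq_of_ne (by simpa using hn), zero_mul]
  · refine tendsto_const_nhds.congr' ((eventually_gt_atTop k).mono fun n hn => ?_)
    simp [wronsk, Pi.single_eq_of_ne hn.ne', Pi.single_eq_of_ne (hn.trans n.lt_succ_self).ne']

lemma IsLimitPoint.innerW_jacobiAct (hC : IsLimitPoint a b) {x y : ℕ → ℂ}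
    (hx : x ∈ DomW (fun _ => 1) (jacobiAct a b)) (hy : y ∈ DomW (fun _ => 1) (jacobiAct a b)) :
    innerW (fun _ => 1) (jacobiAct a b x) y = innerW (fun _ => 1) x (jacobiAct a b y) := by
  rw [mem_DomW_one] at hx hy
  have hTx : Memℓp (jacobiAct a b (star x)) 2 := by
    rw [jacobiAct_star]
    exact hx.2.star_mem
  have hsum_left := summable_mul_of_memlp_two hTx hy.1
  have hsum_right := summable_mul_of_memlp_two hx.1.star_mem hy.2
  have hw := tendsto_wronsk hsum_left hsum_right
  refine innerW_jacobiAct_eq_of_tendsto_wronsk hsum_left hsum_right ?_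
  rwa [hC.wronsk_limit_eq_zero hx.1.star_mem hy.1 hTx hy.2 hw] at hw

theorem IsLimitPoint.isSelfAdjointW (hC : IsLimitPoint a b) :
    IsSelfAdjointW (fun _ => 1) (jacobiAct a b) := by
  intro y z hy hz
  constructor
  · intro h
    have hTy : jacobiAct a b y = z := funext fun k => by
      have := h _ (single_mem_DomW_jacobiAct a b k)
      rwa [innerW_jacobiAct_single, innerW_single] at this
    exact ⟨⟨hy, hTy ▸ hz⟩, hTy⟩
  · rintro ⟨hyD, rfl⟩ x hx
    exact hC.innerW_jacobiAct hx hyD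

end SelfAdjoint

section SelfAdjointRelation

open scoped ComplexConjugate InnerProductSpace

variable {E : Type*} [NormedAddCommGroup E] [InnerProductSpace ℂ E] {G : Submodule ℂ (E × E)}

lemma isClosed_adjoint {𝕜 E F : Type*} [RCLike 𝕜] [NormedAddCommGroup E] [InnerProductSpace 𝕜 E]
    [NormedAddCommGroup F] [InnerProductSpace 𝕜 F] (G : Submodule 𝕜 (E × F)) :
    IsClosed (G.adjoint : Set (F × E)) := by
  rw [Submodule.adjoint, Submodule.map_coe, LinearEquiv.coe_coe,
    LinearEquiv.image_eq_preimage_symm]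
  exact (Submodule.isClosed_orthogonal _).preimage (WithLp.prod_continuous_toLp _ _ _)

lemma inner_im_eq_zero_of_le_adjoint (hG : G ≤ G.adjoint) {p : E × E} (hp : p ∈ G) :
    (⟪p.1, p.2⟫_ℂ).im = 0 := by
  have h := (Submodule.mem_adjoint_iff G p).1 (hG hp) p.1 p.2 hp
  rw [← Complex.conj_eq_iff_im, inner_conj_symm]
  exact sub_eq_zero.1 h

lemma abs_im_mul_norm_le (hG : G ≤ G.adjoint) (l : ℂ) {p : E × E} (hp : p ∈ G) :
    |l.im| * ‖p.1‖ ≤ ‖p.2 - l • p.1‖ := by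
  have him : (⟪p.1, p.2 - l • p.1⟫_ℂ).im = -(l.im * ‖p.1‖ ^ 2) := by
    rw [inner_sub_right, inner_smul_right, inner_self_eq_norm_sq_to_K, Complex.sub_im,
      inner_im_eq_zero_of_le_adjoint hG hp, zero_sub]
    simp [← Complex.ofReal_pow]
  rcases (norm_nonneg p.1).eq_or_lt with h | h
  · simp [← h]
  refine le_of_mul_le_mul_right ?_ h
  calc |l.im| * ‖p.1‖ * ‖p.1‖ = |(⟪p.1, p.2 - l • p.1⟫_ℂ).im| := by
        rw [him, abs_neg, abs_mul, abs_of_nonneg (sq_nonneg ‖p.1‖)]; ring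
    _ ≤ ‖⟪p.1, p.2 - l • p.1⟫_ℂ‖ := Complex.abs_im_le_norm _
    _ ≤ ‖p.2 - l • p.1‖ * ‖p.1‖ := (norm_inner_le_norm _ _).trans_eq (mul_comm _ _)

/-- The operator `T - l`, where `T` is the operator, or more generally the linear relation, with
graph `G`; it is viewed as a bounded map on `G` with the norm inherited from `E × E`. -/
def graphSubSMul (G : Submodule ℂ (E × E)) (l : ℂ) : G →L[ℂ] E :=
  (ContinuousLinearMap.snd ℂ E E - l • ContinuousLinearMap.fst ℂ E E) ∘L G.subtypeL

@[simp] lemma graphSubSMul_apply (l : ℂ) (p : G) :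
    graphSubSMul G l p = (p : E × E).2 - l • (p : E × E).1 := rfl

lemma exists_antilipschitzWith_graphSubSMul (hG : G ≤ G.adjoint) {l : ℂ} (hl : l.im ≠ 0) :
    ∃ K, AntilipschitzWith K (graphSubSMul G l) := by
  let K : ℝ := 1 + (1 + ‖l‖) / |l.im|
  have hl_pos : 0 < |l.im| := abs_pos.2 hl
  refine ⟨⟨K, by positivity⟩, AddMonoidHomClass.antilipschitz_of_bound _ fun p => ?_⟩
  set d := ‖graphSubSMul G l p‖
  have hfst : ‖(p : E × E).1‖ ≤ d / |l.im| :=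
    (le_div_iff₀' hl_pos).2 (abs_im_mul_norm_le hG l p.2)
  have hsnd : ‖(p : E × E).2‖ ≤ d + ‖l‖ * (d / |l.im|) :=
    calc ‖(p : E × E).2‖ ≤ d + ‖l • (p : E × E).1‖ := norm_le_norm_sub_add _ _
      _ ≤ d + ‖l‖ * (d / |l.im|) := by rw [norm_smul]; gcongr
  have hK : K * d = d + d / |l.im| + ‖l‖ * (d / |l.im|) := by simp only [K]; ring
  have : 0 ≤ d / |l.im| := by positivity
  have : 0 ≤ ‖l‖ * (d / |l.im|) := by positivity
  have : 0 ≤ d := norm_nonneg _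
  exact (max_le (by linarith) (by linarith) : ‖(p : E × E)‖ ≤ K * d)

lemma mem_adjoint_of_mem_orthogonal_range {l : ℂ} {v : E}
    (hv : v ∈ (graphSubSMul G l).rangeᗮ) : (v, conj l • v) ∈ G.adjoint := by
  rw [Submodule.mem_adjoint_iff]
  intro x y hxy
  have h := (Submodule.mem_orthogonal _ v).1 hv _ ⟨⟨(x, y), hxy⟩, rfl⟩
  simpa [inner_sub_left, inner_smul_left, inner_smul_right] using h

lemma orthogonal_range_graphSubSMul (hG : G.adjoint = G) {l : ℂ} (hl : l.im ≠ 0) :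
    (graphSubSMul G l).rangeᗮ = ⊥ := by
  refine (Submodule.eq_bot_iff _).2 fun v hv => ?_
  have hmem : (v, conj l • v) ∈ G := hG ▸ mem_adjoint_of_mem_orthogonal_range hv
  have h := abs_im_mul_norm_le hG.ge (conj l) hmem
  rw [sub_self, norm_zero] at h
  simpa [hl] using h.antisymm (by positivity)

theorem bijective_graphSubSMul [CompleteSpace E] (hG : G.adjoint = G) {l : ℂ} (hl : l.im ≠ 0) :
    Function.Bijective (graphSubSMul G l) := by
  have hG_closed : IsClosed (G : Set (E × E)) := hG ▸ isClosed_adjoint G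
  have := hG_closed.completeSpace_coe
  exact (ContinuousLinearMap.bijective_iff_dense_range_and_antilipschitz _).2
    ⟨Submodule.topologicalClosure_eq_top_iff.2 (orthogonal_range_graphSubSMul hG hl),
      exists_antilipschitzWith_graphSubSMul hG.ge hl⟩

end SelfAdjointRelation

section Spectrum

/-- The graph in `ℓ² × ℓ²` of a linear operator `T` on sequences, restricted to its maximal
domain. -/
def l2Graph (T : (ℕ → ℂ) →ₗ[ℂ] (ℕ → ℂ)) :
    Submodule ℂ (lp (fun _ : ℕ => ℂ) 2 × lp (fun _ : ℕ => ℂ) 2) where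
  carrier := {p | T p.1 = p.2}
  add_mem' {p q} hp hq := (map_add T (p.1 : ℕ → ℂ) q.1).trans (congrArg₂ (· + ·) hp hq)
  zero_mem' := map_zero T
  smul_mem' c p hp := (map_smul T c (p.1 : ℕ → ℂ)).trans (congrArg (c • ·) hp)

variable {T : (ℕ → ℂ) →ₗ[ℂ] (ℕ → ℂ)}

lemma inner_eq_innerW (f g : lp (fun _ : ℕ => ℂ) 2) :
    inner ℂ f g = innerW (fun _ => 1) f g := by
  simp [lp.inner_eq_tsum, innerW_one, mul_comm]

lemma forall_mem_l2Graph {P : (ℕ → ℂ) → (ℕ → ℂ) → Prop} :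
    (∀ x y : lp (fun _ : ℕ => ℂ) 2, (x, y) ∈ l2Graph T → P x y)
      ↔ ∀ x ∈ DomW (fun _ => 1) T, P x (T x) := by
  simp only [mem_DomW_one]
  refine ⟨fun h x hx => h ⟨x, hx.1⟩ ⟨T x, hx.2⟩ rfl, fun h x y hxy => ?_⟩
  have hxy : T x = y := hxy
  exact hxy ▸ h x ⟨x.2, hxy ▸ y.2⟩

lemma IsSelfAdjointW.adjoint_l2Graph (hT : IsSelfAdjointW (fun _ => 1) T) :
    (l2Graph T).adjoint = l2Graph T := by
  ext ⟨y, z⟩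
  have hmem : (y : ℕ → ℂ) ∈ DomW (fun _ => 1) T ∧ T y = z ↔ (y, z) ∈ l2Graph T :=
    ⟨And.right, fun h => ⟨mem_DomW_one.2 ⟨y.2, h ▸ z.2⟩, h⟩⟩
  simp only [Submodule.mem_adjoint_iff, inner_eq_innerW, sub_eq_zero]
  rw [forall_mem_l2Graph (P := fun f g => innerW _ g y = innerW _ f z), ← hmem]
  exact hT y z (memL2w_one.2 y.2) (memL2w_one.2 z.2)

theorem IsSelfAdjointW.spectrumW_subset (hT : IsSelfAdjointW (fun _ => 1) T) :
    spectrumW (fun _ => 1) T ⊆ Set.range ((↑) : ℝ → ℂ) := by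
  intro l hl
  by_contra hreal
  have him : l.im ≠ 0 := fun h => hreal ⟨l.re, Complex.ext rfl h.symm⟩
  have hbij := bijective_graphSubSMul hT.adjoint_l2Graph him
  refine hl ⟨fun x hx hTx => ?_, fun y hy => ?_⟩
  · rw [mem_DomW_one] at hx
    let p : l2Graph T := ⟨(⟨x, hx.1⟩, ⟨T x, hx.2⟩), rfl⟩
    have hp : graphSubSMul _ l p = 0 := Subtype.ext (sub_eq_zero.2 hTx)
    have hp₀ : p = 0 := hbij.1 (hp.trans (map_zero _).symm)
    exact congrArg (fun q : l2Graph T => (q.1.1 : ℕ → ℂ)) hp₀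
  · obtain ⟨⟨⟨u, v⟩, huv⟩, hp⟩ := hbij.2 ⟨y, memL2w_one.1 hy⟩
    have huv : T u = v := huv
    refine ⟨u, mem_DomW_one.2 ⟨u.2, huv ▸ v.2⟩, ?_⟩
    rw [huv]
    exact congrArg (fun q : lp (fun _ : ℕ => ℂ) 2 => (q : ℕ → ℂ)) hp

lemma eigenW_subset_spectrumW (w : ℕ → ℝ) (T : (ℕ → ℂ) → ℕ → ℂ) : eigenW w T ⊆ spectrumW w T :=
  fun _ ⟨x, hx, hx0, hTx⟩ h => hx0 (h.1 x hx hTx)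

/-- `jacobiAct` as a linear map. -/
def jacobiLin (a b : ℕ → ℝ) : (ℕ → ℂ) →ₗ[ℂ] (ℕ → ℂ) where
  toFun := jacobiAct a b
  map_add' x y := by
    ext n
    cases n <;> simp only [jacobiAct, Pi.add_apply] <;> ring
  map_smul' c x := by
    ext n
    cases n <;> simp only [jacobiAct, Pi.smul_apply, smul_eq_mul, RingHom.id_apply] <;> ring

variable {a b : ℕ → ℝ}

lemma IsSelfAdjointW.spectrumW_jacobiAct_subset
    (hC : IsSelfAdjointW (fun _ => 1) (jacobiAct a b)) :
    spectrumW (fun _ => 1) (jacobiAct a b) ⊆ Set.range ((↑) : ℝ → ℂ) :=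
  IsSelfAdjointW.spectrumW_subset (T := jacobiLin a b) hC

lemma NoL2GenEig.ofReal_mem_spectrumW (H : NoL2GenEig a b) (ha : ∀ n, a n ≠ 0) (r : ℝ) :
    (r : ℂ) ∈ spectrumW (fun _ => 1) (jacobiAct a b) := by
  rintro ⟨-, hsurj⟩
  obtain ⟨x, hx, hxe⟩ := hsurj (Pi.single 0 1) (single_mem_DomW_jacobiAct a b 0).1
  have hrec : SolvesRecurrence a b r x := fun n =>
    sub_eq_zero.1 ((congrFun hxe (n + 1)).trans (by simp))
  have hx0 : x = 0 := H.eq_zero_of_memlp ha hrec (mem_DomW_one.1 hx).1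
  simpa [hx0, jacobiAct] using congrFun hxe 0

theorem NoL2GenEig.eigenW_eq_empty (H : NoL2GenEig a b) (ha : ∀ n, a n ≠ 0) :
    eigenW (fun _ => 1) (jacobiAct a b) = ∅ := by
  refine Set.eq_empty_of_forall_notMem fun l hl => ?_
  obtain ⟨r, rfl⟩ := (H.isLimitPoint ha).isSelfAdjointW.spectrumW_jacobiAct_subset
    (eigenW_subset_spectrumW _ _ hl)
  obtain ⟨x, hx, hx0, hTx⟩ := hl
  exact hx0 (H.eq_zero_of_memlp ha (fun n => congrFun hTx (n + 1)) (mem_DomW_one.1 hx).1)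

theorem NoL2GenEig.spectrumW_eq (H : NoL2GenEig a b) (ha : ∀ n, a n ≠ 0) :
    spectrumW (fun _ => 1) (jacobiAct a b) = Set.range ((↑) : ℝ → ℂ) :=
  (H.isLimitPoint ha).isSelfAdjointW.spectrumW_jacobiAct_subset.antisymm
    (Set.range_subset_iff.2 (H.ofReal_mem_spectrumW ha))

end Spectrum

/-- Theorem A: under conditions (a)–(g) on the Jacobi entries `a`, `b` and a positive
sequence `α`, the Jacobi matrix is self-adjoint, has no eigenvalues, and its
spectrum is all of ℝ. -/
theorem jacobi_selfAdjoint_no_eigen_spectrum_real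
    (a b α : ℕ → ℝ) (ha : ∀ n, 0 < a n) (hα : ∀ n, 0 < α n)
    (h1 : Tendsto a atTop atTop)
    (h2 : Summable fun n : ℕ =>
      max (-(a (n + 2) / a (n + 1) * (α (n + 2) / α (n + 1))
            - a (n + 1) / a n * (α n / α (n + 1)))) 0)
    (h3 : Summable fun n : ℕ => 1 / a n * |a n / a (n + 1) - α n / α (n + 1)|)
    (h4 : Summable fun n : ℕ => |b (n + 2) / a (n + 1) - b (n + 1) / a n * (α n / α (n + 1))|)
    (h5 : ¬ Summable fun n : ℕ => 1 / (a n * α n))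
    (h6 : Tendsto (fun n => α n / α (n + 1) * (a (n + 1) / a n)) atTop (𝓝 1))
    (h7 : limsup (fun n => ((|b n| / a n : ℝ) : EReal)) atTop < ((2 : ℝ) : EReal)) :
    IsSelfAdjointW (fun _ => 1) (jacobiAct a b) ∧
    eigenW (fun _ => 1) (jacobiAct a b) = ∅ ∧
    spectrumW (fun _ => 1) (jacobiAct a b) = Set.range ((↑) : ℝ → ℂ) := by
  have ha' : ∀ n, a n ≠ 0 := fun n => (ha n).ne'
  have H : NoL2GenEig a b := by
    intro lam u hu
    have hmono := eventually_mul_le_two_mul_succ ha hα h2 h6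
    obtain ⟨q, hq, hcomp⟩ :=
      exists_lt_one_eventually_abs_turanForm_sub_turanDiag_le ha hα h1 h6 h7 lam u
    obtain ⟨c, hc, hV⟩ := hu.exists_pos_eventually_le_turanDiag ha hα
      (summable_turanDefect ha h2 h3 h4 lam) hmono hq hcomp
    exact not_memlp_two_of_le_turanDiag (fun n => mul_pos (ha n) (hα n)) hmono h5 hc hV
  exact ⟨(H.isLimitPoint ha').isSelfAdjointW, H.eigenW_eq_empty ha', H.spectrumW_eq ha'⟩
end
end

section
/- Let {a_n} be positive reals, {b_n} real, and {α_n} positive reals satisfying: (a) a_n → ∞; (b) ∑_{n≥1} [ (a_{n+1}/a_n)(α_{n+1}/α_n) − (a_n/a_{n−1})(α_{n−1}/α_n) ]⁻ < ∞; (c) ∑_{n≥1} (1/a_{n−1}) | a_{n−1}/a_n − α_{n−1}/α_n | < ∞; (d) ∑_{n≥1} | b_{n+1}/a_n − (b_n/a_{n−1})(α_{n−1}/α_n) | < ∞; (e) ∑_{n≥0} 1/(a_n α_n) = ∞; (f) (α_{n−1}/α_n)(a_n/a_{n−1}) → 1; (g) limsup_{n→∞} |b_n|/a_n < 2. Then for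 every λ ∈ ℝ and every generalized eigenvector {u_n} associated with λ one has ∑_{n≥0} u_n² = ∞. -/
/-!
Subtracting `lam` from every `bₙ` reduces to the eigenvalue `0`: (a) says that (g) survives this
shift, and (c) says that (d) does.  For the eigenvalue `0` consider the shifted Turán determinant
`Sₙ = αₙ₋₁ (aₙ² / aₙ₋₁) uₙ₊₁² - αₙ aₙ₊₁ uₙ uₙ₊₂`.  By the recurrence it is `aₙ αₙ` times a quadratic
form in `(uₙ, uₙ₊₁)`, which by (d), (f) and (g) is eventually uniformly comparable with
`uₙ² + uₙ₊₁²`.  The negative part of `Sₙ₊₁ - Sₙ` is controlled, relative to `Sₙ` and `Sₙ₊₁`, by the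
summands of (b) and (d), so `Sₙ` stays above a positive constant.  Hence `uₙ² + uₙ₊₁²` dominates a
multiple of `1 / (aₙ αₙ)`, whose sum diverges by (e).
-/

open Filter Topology

noncomputable section

section RealSequences

variable {ι : Type*} {l : Filter ι}

lemma limsup_coe_lt_coe_iff {f : ι → ℝ} {r : ℝ} :
    limsup (fun i => (f i : EReal)) l < (r : EReal) ↔ ∃ q < r, ∀ᶠ i in l, f i ≤ q := by
  constructor
  · intro h
    obtain ⟨q, hfq, hqr⟩ := EReal.lt_iff_exists_real_btwn.mp h
    refine ⟨q, EReal.coe_lt_coe_iff.mp hqr, ?_⟩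
    filter_upwards [eventually_lt_of_limsup_lt hfq] with i hi
    exact (EReal.coe_lt_coe_iff.mp hi).le
  · rintro ⟨q, hqr, hfq⟩
    refine (limsup_le_of_le (h := ?_)).trans_lt (EReal.coe_lt_coe_iff.mpr hqr)
    filter_upwards [hfq] with i hi
    exact EReal.coe_le_coe_iff.mpr hi

lemma eventually_abs_lt_of_tendsto_sub_mul {x y k : ι → ℝ} {p q : ℝ} (hpq : p < q)
    (hx : ∀ᶠ i in l, |x i| ≤ p) (hk : Tendsto k l (𝓝 1))
    (hxy : Tendsto (fun i => y i - x i * k i) l (𝓝 0)) : ∀ᶠ i in l, |y i| < q := by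
  have hlim : Tendsto (fun i => p * |k i| + |y i - x i * k i|) l (𝓝 p) := by
    simpa using (hk.abs.const_mul p).add hxy.abs
  filter_upwards [hx, hlim.eventually_lt_const hpq] with i hxi hi
  calc |y i| = |x i * k i + (y i - x i * k i)| := by rw [add_sub_cancel]
    _ ≤ |x i| * |k i| + |y i - x i * k i| := by rw [← abs_mul]; exact abs_add_le _ _
    _ ≤ p * |k i| + |y i - x i * k i| := by gcongr
    _ < q := hi

lemma exists_pos_eventually_le_of_le_succ_mul_exp {S g : ℕ → ℝ} (hS : ∀ᶠ n in atTop, 0 < S n)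
    (hg : Summable g) (h : ∀ᶠ n in atTop, S n ≤ S (n + 1) * Real.exp (g n)) :
    ∃ δ > 0, ∀ᶠ n in atTop, δ ≤ S n := by
  obtain ⟨N, hN⟩ := eventually_atTop.mp (hS.and h)
  let T : ℕ → ℝ := fun n => S n * Real.exp (∑ i ∈ Finset.range n, g i)
  have hT_succ : ∀ n ≥ N, T n ≤ T (n + 1) := fun n hn => by
    simp only [T, Finset.sum_range_succ_comm, Real.exp_add, ← mul_assoc]
    gcongr
    exact (hN n hn).2
  have hT : ∀ n ≥ N, T N ≤ T n := fun n hn =>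
    Nat.le_induction le_rfl (fun m hm ih => ih.trans (hT_succ m hm)) n hn
  refine ⟨T N * Real.exp (-(∑' i, g i + 1)),
    mul_pos (mul_pos (hN N le_rfl).1 (Real.exp_pos _)) (Real.exp_pos _), ?_⟩
  filter_upwards [eventually_ge_atTop N,
    hg.hasSum.tendsto_sum_nat.eventually_lt_const (lt_add_one _)] with n hn hsum
  have hSn := (hN n hn).1
  rw [Real.exp_neg, ← div_eq_mul_inv, div_le_iff₀ (Real.exp_pos _)]
  calc T N ≤ S n * Real.exp (∑ i ∈ Finset.range n, g i) := hT n hn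
    _ ≤ S n * Real.exp (∑' i, g i + 1) := by gcongr

lemma one_le_one_sub_mul_exp_two_mul {x : ℝ} (h0 : 0 ≤ x) (h1 : x ≤ 1 / 2) :
    1 ≤ (1 - x) * Real.exp (2 * x) :=
  calc 1 ≤ (1 - x) * (2 * x + 1) := by nlinarith
    _ ≤ (1 - x) * Real.exp (2 * x) :=
      mul_le_mul_of_nonneg_left (Real.add_one_le_exp _) (by linarith)

lemma exists_pos_eventually_le_of_mul_one_sub_le {S β γ : ℕ → ℝ}
    (hS : ∀ᶠ n in atTop, 0 < S n) (hβ0 : ∀ n, 0 ≤ β n) (hβ : Summable β) (hγ : Summable γ)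
    (h : ∀ᶠ n in atTop, S n * (1 - β n) ≤ S (n + 1) * (1 + γ n)) :
    ∃ δ > 0, ∀ᶠ n in atTop, δ ≤ S n := by
  refine exists_pos_eventually_le_of_le_succ_mul_exp hS (hγ.add (hβ.mul_left 2)) ?_
  filter_upwards [hS, (tendsto_add_atTop_nat 1).eventually hS, h,
    hβ.tendsto_atTop_zero.eventually_le_const (by norm_num : (0 : ℝ) < 1 / 2)]
    with n hSn hSn' hn hβn
  calc S n ≤ S n * ((1 - β n) * Real.exp (2 * β n)) :=
        le_mul_of_one_le_right hSn.le (one_le_one_sub_mul_exp_two_mul (hβ0 n) hβn)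
    _ = S n * (1 - β n) * Real.exp (2 * β n) := by ring
    _ ≤ S (n + 1) * (γ n + 1) * Real.exp (2 * β n) := by rw [add_comm (γ n)]; gcongr
    _ ≤ S (n + 1) * Real.exp (γ n) * Real.exp (2 * β n) := by
        gcongr; exact Real.add_one_le_exp _
    _ = S (n + 1) * Real.exp (γ n + 2 * β n) := by rw [mul_assoc, Real.exp_add]

lemma not_summable_sq_of_le_mul_sq_add_sq {w u : ℕ → ℝ} {δ : ℝ} (hδ : 0 < δ)
    (hw0 : ∀ n, 0 < w n) (hw : ¬ Summable fun n => 1 / w n)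
    (h : ∀ᶠ n in atTop, δ ≤ w n * (u n ^ 2 + u (n + 1) ^ 2)) :
    ¬ Summable fun n => u n ^ 2 := by
  intro hu
  have hpair : Summable fun n => u n ^ 2 + u (n + 1) ^ 2 :=
    hu.add ((summable_nat_add_iff 1).mpr hu)
  refine hw ((hpair.div_const δ).of_norm_bounded_eventually_nat ?_)
  filter_upwards [h] with n hn
  rwa [Real.norm_of_nonneg (one_div_pos.mpr (hw0 n)).le, div_le_div_iff₀ (hw0 n) hδ, one_mul,
    mul_comm]

lemma abs_mul_mul_le_mul_sq_add_sq {s t : ℝ} (ht : |t| ≤ 2 * s) (x y : ℝ) :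
    |t * (x * y)| ≤ s * (x ^ 2 + y ^ 2) :=
  calc |t * (x * y)| = |t| * (|x| * |y|) := by rw [abs_mul, abs_mul]
    _ ≤ 2 * s * (|x| * |y|) := by gcongr
    _ = s * (2 * |x| * |y|) := by ring
    _ ≤ s * (|x| ^ 2 + |y| ^ 2) :=
        mul_le_mul_of_nonneg_left (two_mul_le_add_sq _ _) (by linarith [abs_nonneg t])
    _ = s * (x ^ 2 + y ^ 2) := by rw [sq_abs, sq_abs]

end RealSequences

section Energy

/-- The sequence `(αₙ₋₁ / αₙ) (aₙ / aₙ₋₁)` of condition (f), indexed from `n = 1`. -/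
def weightRatio (a α : ℕ → ℝ) (n : ℕ) : ℝ :=
  α n / α (n + 1) * (a (n + 1) / a n)

/-- The sequence whose negative part is summed in condition (b), indexed from `n = 1`. -/
def weightIncrement (a α : ℕ → ℝ) (n : ℕ) : ℝ :=
  a (n + 2) / a (n + 1) * (α (n + 2) / α (n + 1)) - a (n + 1) / a n * (α n / α (n + 1))

/-- The sequence whose absolute value is summed in condition (d), indexed from `n = 1`. -/
def diagIncrement (a b α : ℕ → ℝ) (n : ℕ) : ℝ :=
  b (n + 2) / a (n + 1) - b (n + 1) / a n * (α n / α (n + 1))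

/-- The squared Euclidean norm of `(uₙ, uₙ₊₁)` weighted by `aₙ αₙ`; the energy is compared with
it. -/
def weightedNormSq (a α u : ℕ → ℝ) (n : ℕ) : ℝ :=
  a n * α n * (u n ^ 2 + u (n + 1) ^ 2)

/-- The shifted Turán determinant of a solution `u` for the eigenvalue `0`, written as a quadratic
form in `(uₙ₊₁, uₙ₊₂)`.  The index is shifted by one so that `aₙ` and `αₙ` are defined. -/
def energy (a b α u : ℕ → ℝ) (n : ℕ) : ℝ :=
  a (n + 1) * α (n + 1) * (u (n + 1) ^ 2 + weightRatio a α n * u (n + 2) ^ 2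
    + b (n + 2) / a (n + 1) * (u (n + 1) * u (n + 2)))

variable {a b α u : ℕ → ℝ} {lam : ℝ}

lemma IsGenEig.sub_eigenvalue (h : IsGenEig a b lam u) :
    IsGenEig a (fun n => b n - lam) 0 u :=
  ⟨h.1, fun n => by rw [h.2 n]; ring⟩

lemma IsGenEig.not_consecutive_zeros (ha : ∀ n, 0 < a n) (h : IsGenEig a b lam u) (n : ℕ) :
    ¬(u n = 0 ∧ u (n + 1) = 0) := by
  induction n with
  | zero => exact h.1
  | succ n ih =>
    rintro ⟨hu1, hu2⟩
    have hrec : a n * u n = 0 := by simpa [hu1, hu2] using h.2 n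
    exact ih ⟨(mul_eq_zero.mp hrec).resolve_left (ha n).ne', hu1⟩

lemma IsGenEig.weightedNormSq_pos (ha : ∀ n, 0 < a n) (hα : ∀ n, 0 < α n)
    (h : IsGenEig a b lam u) (n : ℕ) : 0 < weightedNormSq a α u n := by
  refine mul_pos (mul_pos (ha n) (hα n)) ?_
  rcases not_and_or.mp (h.not_consecutive_zeros ha n) with hu | hu <;> positivity

/-- The recurrence is multiplied by `aₙ₊₂ uₙ₊₃ - aₙ₊₁ uₙ₊₁` to trade the `uₙ₊₁²` term of the energy
at `n` for the `uₙ₊₃²` term of the energy at `n + 1`. -/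
lemma IsGenEig.energy_succ_sub (ha : ∀ n, 0 < a n) (hα : ∀ n, 0 < α n)
    (h : IsGenEig a b 0 u) (n : ℕ) :
    energy a b α u (n + 1) - energy a b α u n =
      a (n + 1) * α (n + 1) * (weightIncrement a α n * u (n + 2) ^ 2)
        + a (n + 2) * α (n + 2) * (diagIncrement a b α (n + 1) * (u (n + 2) * u (n + 3))) := by
  have hrec : a (n + 2) * u (n + 3) = (0 - b (n + 2)) * u (n + 2) - a (n + 1) * u (n + 1) :=
    h.2 (n + 1)
  have ha0 := (ha n).ne'
  have ha1 := (ha (n + 1)).ne'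
  have ha2 := (ha (n + 2)).ne'
  have hα1 := (hα (n + 1)).ne'
  have hα2 := (hα (n + 2)).ne'
  simp only [energy, weightRatio, weightIncrement, diagIncrement, add_assoc, Nat.reduceAdd]
  field_simp
  linear_combination α (n + 1) * a n * (a (n + 2) * u (n + 3) - a (n + 1) * u (n + 1)) * hrec

lemma IsGenEig.energy_le_energy_succ_add (ha : ∀ n, 0 < a n) (hα : ∀ n, 0 < α n)
    (h : IsGenEig a b 0 u) (n : ℕ) :
    energy a b α u n ≤ energy a b α u (n + 1)
      + (weightIncrement a α n)⁻ * weightedNormSq a α u (n + 1)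
      + |diagIncrement a b α (n + 1)| * weightedNormSq a α u (n + 2) := by
  set D := weightIncrement a α n
  set E := diagIncrement a b α (n + 1)
  have hw1 : 0 ≤ a (n + 1) * α (n + 1) := (mul_pos (ha _) (hα _)).le
  have hw2 : 0 ≤ a (n + 2) * α (n + 2) := (mul_pos (ha _) (hα _)).le
  have hD : -(D * u (n + 2) ^ 2) ≤ D⁻ * (u (n + 1) ^ 2 + u (n + 2) ^ 2) :=
    calc -(D * u (n + 2) ^ 2) = -D * u (n + 2) ^ 2 := (neg_mul _ _).symm
      _ ≤ D⁻ * (u (n + 1) ^ 2 + u (n + 2) ^ 2) :=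
        mul_le_mul (neg_le_negPart D) (le_add_of_nonneg_left (sq_nonneg _)) (sq_nonneg _)
          (negPart_nonneg D)
  have hE : -(E * (u (n + 2) * u (n + 3))) ≤ |E| * (u (n + 2) ^ 2 + u (n + 3) ^ 2) :=
    (neg_le_abs _).trans (abs_mul_mul_le_mul_sq_add_sq (by linarith [abs_nonneg E]) _ _)
  have hid := h.energy_succ_sub ha hα n
  have hDw := mul_le_mul_of_nonneg_left hD hw1
  have hEw := mul_le_mul_of_nonneg_left hE hw2
  simp only [weightedNormSq, add_assoc, Nat.reduceAdd]
  linarith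

lemma exists_lt_eventually_abs_diag_lt {r : ℝ} (ha : ∀ n, 0 < a n)
    (hdiag : Summable fun n => |diagIncrement a b α n|)
    (hratio : Tendsto (weightRatio a α) atTop (𝓝 1))
    (hlimsup : limsup (fun n => ((|b n| / a n : ℝ) : EReal)) atTop < (r : EReal)) :
    ∃ q < r, ∀ᶠ n in atTop, |b (n + 2) / a (n + 1)| < q := by
  obtain ⟨p, hp, hbp⟩ := limsup_coe_lt_coe_iff.mp hlimsup
  obtain ⟨q, hpq, hq⟩ := exists_between hp
  refine ⟨q, hq, eventually_abs_lt_of_tendsto_sub_mul (x := fun n => b (n + 1) / a (n + 1)) hpq ?_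
    hratio ?_⟩
  · filter_upwards [(tendsto_add_atTop_nat 1).eventually hbp] with n hn
    rwa [abs_div, abs_of_pos (ha _)]
  · refine (tendsto_zero_iff_abs_tendsto_zero _).mpr hdiag.tendsto_atTop_zero |>.congr fun n => ?_
    have ha1 := (ha (n + 1)).ne'
    simp only [diagIncrement, weightRatio]
    field_simp

lemma exists_pos_eventually_energy_bounds (ha : ∀ n, 0 < a n) (hα : ∀ n, 0 < α n)
    (hdiag : Summable fun n => |diagIncrement a b α n|)
    (hratio : Tendsto (weightRatio a α) atTop (𝓝 1))
    (hlimsup : limsup (fun n => ((|b n| / a n : ℝ) : EReal)) atTop < ((2 : ℝ) : EReal))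
    (u : ℕ → ℝ) :
    ∃ c > 0, ∀ᶠ n in atTop, c * weightedNormSq a α u (n + 1) ≤ energy a b α u n ∧
      energy a b α u n ≤ 3 * weightedNormSq a α u (n + 1) := by
  obtain ⟨q, hq, hbq⟩ := exists_lt_eventually_abs_diag_lt ha hdiag hratio hlimsup
  refine ⟨(2 - q) / 4, by linarith, ?_⟩
  filter_upwards [hbq, hratio.eventually_const_lt (show (2 + q) / 4 < 1 by linarith),
    hratio.eventually_lt_const one_lt_two] with n hbn hkl hku
  have hw : 0 ≤ a (n + 1) * α (n + 1) := (mul_pos (ha _) (hα _)).le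
  have hcross := abs_le.mp <| abs_mul_mul_le_mul_sq_add_sq (s := q / 2)
    (by linarith : |b (n + 2) / a (n + 1)| ≤ 2 * (q / 2)) (u (n + 1)) (u (n + 2))
  simp only [weightedNormSq, energy, mul_left_comm _ (a (n + 1) * α (n + 1)), add_assoc,
    Nat.reduceAdd]
  constructor <;> refine mul_le_mul_of_nonneg_left ?_ hw
  · nlinarith [hcross.1, sq_nonneg (u (n + 1)), sq_nonneg (u (n + 2))]
  · nlinarith [hcross.2, sq_nonneg (u (n + 1)), sq_nonneg (u (n + 2))]

lemma IsGenEig.exists_pos_eventually_le_weightedNormSq (ha : ∀ n, 0 < a n) (hα : ∀ n, 0 < α n)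
    (hweight : Summable fun n => (weightIncrement a α n)⁻)
    (hdiag : Summable fun n => |diagIncrement a b α n|)
    (hratio : Tendsto (weightRatio a α) atTop (𝓝 1))
    (hlimsup : limsup (fun n => ((|b n| / a n : ℝ) : EReal)) atTop < ((2 : ℝ) : EReal))
    (h : IsGenEig a b 0 u) :
    ∃ δ > 0, ∀ᶠ n in atTop, δ ≤ weightedNormSq a α u (n + 1) := by
  obtain ⟨c, hc, hbounds⟩ := exists_pos_eventually_energy_bounds ha hα hdiag hratio hlimsup u
  have hpos : ∀ᶠ n in atTop, 0 < energy a b α u n := by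
    filter_upwards [hbounds] with n hn
    exact (mul_pos hc (h.weightedNormSq_pos ha hα _)).trans_le hn.1
  have hstep : ∀ᶠ n in atTop,
      energy a b α u n * (1 - (weightIncrement a α n)⁻ / c) ≤
        energy a b α u (n + 1) * (1 + |diagIncrement a b α (n + 1)| / c) := by
    filter_upwards [hbounds, (tendsto_add_atTop_nat 1).eventually hbounds] with n hn hn'
    have hN := (le_div_iff₀' hc).mpr hn.1
    have hN' := (le_div_iff₀' hc).mpr hn'.1
    have hD := mul_le_mul_of_nonneg_left hN (negPart_nonneg (weightIncrement a α n))
    have hE := mul_le_mul_of_nonneg_left hN' (abs_nonneg (diagIncrement a b α (n + 1)))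
    linear_combination h.energy_le_energy_succ_add ha hα n + hD + hE
  obtain ⟨δ, hδ, hle⟩ := exists_pos_eventually_le_of_mul_one_sub_le hpos
    (fun n => div_nonneg (negPart_nonneg _) hc.le) (hweight.div_const c)
    (((summable_nat_add_iff 1).mpr hdiag).div_const c) hstep
  refine ⟨δ / 3, by positivity, ?_⟩
  filter_upwards [hle, hbounds] with n hn hn'
  linarith [hn'.2]

end Energy

section ShiftOfDiagonal

variable {a b α : ℕ → ℝ}

lemma summable_abs_diagIncrement_sub_const (ha : ∀ n, 0 < a n)
    (hshift : Summable fun n : ℕ => 1 / a n * |a n / a (n + 1) - α n / α (n + 1)|)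
    (hdiag : Summable fun n => |diagIncrement a b α n|) (lam : ℝ) :
    Summable fun n => |diagIncrement a (fun m => b m - lam) α n| := by
  refine Summable.of_nonneg_of_le (fun _ => abs_nonneg _) (fun n => ?_)
    (hdiag.add (hshift.mul_left |lam|))
  have hsplit : diagIncrement a (fun m => b m - lam) α n =
      diagIncrement a b α n - lam * (1 / a n * (a n / a (n + 1) - α n / α (n + 1))) := by
    have ha0 := (ha n).ne'
    have ha1 := (ha (n + 1)).ne'
    simp only [diagIncrement]
    field_simp
    ring
  rw [hsplit]
  refine (abs_sub _ _).trans_eq ?_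
  rw [abs_mul, abs_mul, abs_of_pos (one_div_pos.mpr (ha n))]

lemma limsup_abs_sub_const_div_lt (ha : ∀ n, 0 < a n) (ha_top : Tendsto a atTop atTop) {r : ℝ}
    (h : limsup (fun n => ((|b n| / a n : ℝ) : EReal)) atTop < (r : EReal)) (lam : ℝ) :
    limsup (fun n => ((|b n - lam| / a n : ℝ) : EReal)) atTop < (r : EReal) := by
  obtain ⟨p, hpr, hbp⟩ := limsup_coe_lt_coe_iff.mp h
  obtain ⟨q, hpq, hqr⟩ := exists_between hpr
  have habs : ∀ (x : ℝ) n, |x / a n| = |x| / a n := fun x n => by rw [abs_div, abs_of_pos (ha n)]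
  have hdiff : Tendsto (fun n => (b n - lam) / a n - b n / a n * 1) atTop (𝓝 0) :=
    (ha_top.const_div_atTop (-lam)).congr fun n => by ring
  have hlt := eventually_abs_lt_of_tendsto_sub_mul hpq (by simpa only [habs] using hbp)
    tendsto_const_nhds hdiff
  refine limsup_coe_lt_coe_iff.mpr ⟨q, hqr, ?_⟩
  filter_upwards [hlt] with n hn
  exact (habs _ n ▸ hn).le

end ShiftOfDiagonal

theorem genEigenvector_not_square_summable_general {a b α u : ℕ → ℝ} {lam : ℝ}
    (ha : ∀ n, 0 < a n) (hα : ∀ n, 0 < α n)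
    (hweight : Summable fun n => (weightIncrement a α n)⁻)
    (hdiag : Summable fun n => |diagIncrement a (fun m => b m - lam) α n|)
    (hdiv : ¬ Summable fun n => 1 / (a n * α n))
    (hratio : Tendsto (weightRatio a α) atTop (𝓝 1))
    (hlimsup : limsup (fun n => ((|b n - lam| / a n : ℝ) : EReal)) atTop < ((2 : ℝ) : EReal))
    (hu : IsGenEig a b lam u) : ¬ Summable fun n => u n ^ 2 := by
  obtain ⟨δ, hδ, hle⟩ := hu.sub_eigenvalue.exists_pos_eventually_le_weightedNormSq ha hα hweight
    hdiag hratio hlimsup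
  rw [← summable_nat_add_iff 1] at hdiv ⊢
  exact not_summable_sq_of_le_mul_sq_add_sq hδ (fun n => mul_pos (ha _) (hα _)) hdiv hle

/-- Under conditions (a)–(g), for every real `lam`, every generalized eigenvector
associated with `lam` fails to be square-summable. -/
theorem genEigenvector_not_square_summable
    (a b α : ℕ → ℝ) (ha : ∀ n, 0 < a n) (hα : ∀ n, 0 < α n)
    (h1 : Tendsto a atTop atTop)
    (h2 : Summable fun n : ℕ =>
      max (-(a (n + 2) / a (n + 1) * (α (n + 2) / α (n + 1))
            - a (n + 1) / a n * (α n / α (n + 1)))) 0)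
    (h3 : Summable fun n : ℕ => 1 / a n * |a n / a (n + 1) - α n / α (n + 1)|)
    (h4 : Summable fun n : ℕ => |b (n + 2) / a (n + 1) - b (n + 1) / a n * (α n / α (n + 1))|)
    (h5 : ¬ Summable fun n : ℕ => 1 / (a n * α n))
    (h6 : Tendsto (fun n => α n / α (n + 1) * (a (n + 1) / a n)) atTop (𝓝 1))
    (h7 : limsup (fun n => ((|b n| / a n : ℝ) : EReal)) atTop < ((2 : ℝ) : EReal)) :
    ∀ (lam : ℝ) (u : ℕ → ℝ), IsGenEig a b lam u → ¬ Summable fun n => u n ^ 2 := fun lam _ hu =>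
  genEigenvector_not_square_summable_general ha hα h2
    (summable_abs_diagIncrement_sub_const ha h3 h4 lam) h5 h6
    (limsup_abs_sub_const_div_lt ha h1 h7 lam) hu
end
end
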